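/- Let φ and ψ be formulas of the closed Reflection Calculus RC⁰ and let A and B be worms such that φ ≡_RC A and ψ ≡_RC B. Then φ ⊢_RC ψ if and only if A ⊢_WC B. -/

import Mathlib

/-!
Soundness of WC in RC is direct: rule R3 follows from the RC axiom for `⟨α⟩φ ∧ ⟨β⟩ψ`, iterated
along the entries of a worm (`RCDer.append`).

For the converse, WC is shown to have binary meets: any two worms `A`, `B` have a worm `M` such that
`D ⊢ M` iff `D ⊢ A` and `D ⊢ B` (`WCDer.exists_meet`). Interpreting conjunction by such meets gives
a translation `RCFormula.toWorm` of formulas to worms which is the identity on worms and maps RC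
derivations to WC derivations (`RCDer.toWC`), so RC is conservative over WC.

Everything rests on cutting a worm as `A₁ ++ A₂`, where all entries of `A₁` exceed `μ` and `A₂` is
empty or starts with an entry at most `μ`; then `D ⊢ A₁ ++ A₂` iff `D ⊢ A₁` and `D ⊢ A₂`
(`WCDer.append_iff`). Cutting at the least entry `μ` occurring in `A` and `B`, a meet is obtained by
induction as a meet of `A₁` and `B₁` followed by the stronger of `A₂` and `B₂`. The latter two are
comparable by the linearity of worms (`WCDer.trichotomy`): if all entries of `A` and `B` are at
least `ν`, then `A ⊢ νB`, or `B ⊢ νA`, or `A` and `B` are equivalent.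
-/

/-- A worm is a finite list of ordinals; `[]` is ⊤. -/
abbrev Worm : Type _ := List Ordinal

/-- Formulas of the closed Reflection Calculus RC⁰. -/
inductive RCFormula : Type _ where
  | top : RCFormula
  | and : RCFormula → RCFormula → RCFormula
  | dia : Ordinal → RCFormula → RCFormula

/-- The RC⁰ formula corresponding to a worm. -/
def Worm.toRC : Worm → RCFormula
  | [] => .top
  | α :: A => .dia α (Worm.toRC A)

/-- Derivability in the closed Reflection Calculus RC⁰. -/
inductive RCDer : RCFormula → RCFormula → Prop where
  | refl (φ) : RCDer φ φ
  | top (φ) : RCDer φ .top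
  | andL (φ ψ) : RCDer (.and φ ψ) φ
  | andR (φ ψ) : RCDer (.and φ ψ) ψ
  | trans_ax (α φ) : RCDer (.dia α (.dia α φ)) (.dia α φ)
  | mono_ax {α β : Ordinal} (φ) : β < α → RCDer (.dia α φ) (.dia β φ)
  | ax5 {α β : Ordinal} (φ ψ) : β < α →
      RCDer (.and (.dia α φ) (.dia β ψ)) (.dia α (.and φ (.dia β ψ)))
  | cut {φ ψ χ} : RCDer φ ψ → RCDer ψ χ → RCDer φ χ
  | andI {φ ψ χ} : RCDer φ ψ → RCDer φ χ → RCDer φ (.and ψ χ)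
  | nec {φ ψ} (α) : RCDer φ ψ → RCDer (.dia α φ) (.dia α ψ)

/-- Derivability in the Worm Calculus WC. -/
inductive WCDer : Worm → Worm → Prop where
  | top (A) : WCDer A []
  | trans_ax (α A) : WCDer (α :: α :: A) (α :: A)
  | mono_ax {α β : Ordinal} (A) : β < α → WCDer (α :: A) (β :: A)
  | cut {A B C} : WCDer A B → WCDer B C → WCDer A C
  | nec {A B} (α) : WCDer A B → WCDer (α :: A) (α :: B)
  | rule3 {A B C} (α) : WCDer A B → WCDer A (α :: C) →
      (∀ β ∈ B, α + 1 ≤ β) → WCDer A (B ++ α :: C)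

open Classical in
/-- The α-head of a worm: its longest initial segment with all entries ≥ α. -/
noncomputable def wormHead (α : Ordinal) (A : Worm) : Worm :=
  A.takeWhile (fun β => decide (α ≤ β))

open Classical in
/-- The α-remainder of a worm: what is left after removing the α-head. -/
noncomputable def wormRem (α : Ordinal) (A : Worm) : Worm :=
  A.dropWhile (fun β => decide (α ≤ β))

/-- The α-body of a worm: the tail of its (α+1)-remainder. -/
noncomputable def wormBody (α : Ordinal) (A : Worm) : Worm :=
  (wormRem (α + 1) A).tail

/-- A Kripke model: a carrier with a relation for each ordinal. -/
structure KripkeModel : Type _ where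
  W : Type _
  R : Ordinal → W → W → Prop

/-- Forcing of worms in a Kripke model. -/
def KripkeModel.forces (M : KripkeModel) : M.W → Worm → Prop
  | _, [] => True
  | x, α :: A => ∃ y, M.R α x y ∧ M.forces y A

/-- A Kripke model is Euclidean if `x R_α y` and `x R_β z` with `β < α` imply `y R_β z`. -/
def KripkeModel.Euclidean (M : KripkeModel) : Prop :=
  ∀ ⦃α β : Ordinal⦄, β < α → ∀ ⦃x y z : M.W⦄, M.R α x y → M.R β x z → M.R β y z

/-- A Kripke model is a universal model for WC if derivability coincides with
semantic consequence on the model. -/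
def KripkeModel.UniversalWC (M : KripkeModel) : Prop :=
  ∀ A B : Worm, WCDer A B ↔ ∀ x : M.W, M.forces x A → M.forces x B

/-! ### Soundness of WC in RC -/

theorem RCDer.append {B C : Worm} {α : Ordinal} (hB : ∀ β ∈ B, α < β) :
    RCDer (.and B.toRC (.dia α (Worm.toRC C))) (Worm.toRC (B ++ α :: C)) := by
  induction B with
  | nil => exact .andR _ _
  | cons b B ih =>
    exact .cut (.ax5 _ _ (hB b (by simp)))
      (.nec b (ih fun β hβ => hB β (List.mem_cons_of_mem _ hβ)))

theorem WCDer.toRC {A B : Worm} (h : WCDer A B) : RCDer A.toRC B.toRC := by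
  induction h with
  | top A => exact .top _
  | trans_ax α A => exact .trans_ax _ _
  | mono_ax A h => exact .mono_ax _ h
  | cut _ _ h₁ h₂ => exact .cut h₁ h₂
  | nec α _ h => exact .nec α h
  | rule3 α _ _ hB h₁ h₂ =>
    exact .cut (.andI h₁ h₂) (RCDer.append fun β hβ => Order.add_one_le_iff.1 (hB β hβ))

/-! ### Cutting worms -/

/-- The worm `A` is empty or its first entry is at most `β`. -/
def HeadLE (β : Ordinal) (A : Worm) : Prop := ∀ x ∈ A.head?, x ≤ β

theorem exists_split (β : Ordinal) (A : Worm) :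
    ∃ A₁ A₂ : Worm, A = A₁ ++ A₂ ∧ (∀ x ∈ A₁, β < x) ∧ HeadLE β A₂ := by
  induction A with
  | nil => exact ⟨[], [], rfl, by simp, by simp [HeadLE]⟩
  | cons a A ih =>
    by_cases h : β < a
    · obtain ⟨A₁, A₂, rfl, h₁, h₂⟩ := ih
      exact ⟨a :: A₁, A₂, rfl, by simpa using ⟨h, h₁⟩, h₂⟩
    · exact ⟨[], a :: A, rfl, by simp, by simpa [HeadLE] using h⟩

namespace WCDer

theorem refl (A : Worm) : WCDer A A := by
  induction A with
  | nil => exact .top _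
  | cons a A ih => exact .nec a ih

theorem mono_le {α β : Ordinal} (h : β ≤ α) (A : Worm) : WCDer (α :: A) (β :: A) := by
  rcases h.eq_or_lt with rfl | h
  · exact refl _
  · exact .mono_ax _ h

theorem append_left (A B : Worm) : WCDer (A ++ B) A := by
  induction A with
  | nil => exact .top _
  | cons a A ih => exact .nec a ih

theorem append_right {β : Ordinal} {A B : Worm} (hA : ∀ x ∈ A, β < x) (hB : HeadLE β B) :
    WCDer (A ++ B) B := by
  induction A with
  | nil => exact refl _
  | cons a A ih =>
    have h := ih fun x hx => hA x (List.mem_cons_of_mem _ hx)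
    cases B with
    | nil => exact .top _
    | cons b B =>
      have hb : b ≤ a := (hB b (by simp)).trans (hA a (by simp)).le
      exact .cut (.nec a h) (.cut (mono_le hb _) (.trans_ax _ _))

theorem append_iff {β : Ordinal} {A B D : Worm} (hA : ∀ x ∈ A, β < x) (hB : HeadLE β B) :
    WCDer D (A ++ B) ↔ WCDer D A ∧ WCDer D B := by
  refine ⟨fun h => ⟨.cut h (append_left _ _), .cut h (append_right hA hB)⟩, ?_⟩
  rintro ⟨h₁, h₂⟩
  cases B with
  | nil => simpa using h₁
  | cons b B =>
    exact .rule3 b h₁ h₂ fun x hx =>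
      Order.add_one_le_iff.2 ((hB b (by simp)).trans_lt (hA x hx))

/-! ### Linearity of worms and existence of meets -/

theorem exists_min {L : Worm} (h : L ≠ []) : ∃ μ ∈ L, ∀ x ∈ L, μ ≤ x := by
  obtain ⟨μ, hμ, hmin⟩ := L.toFinset.exists_min_image id (by simpa using h)
  exact ⟨μ, by simpa using hμ, fun x hx => hmin x (by simpa using hx)⟩

theorem trichotomy (n : ℕ) : ∀ (A B : Worm), A.length + B.length = n → ∀ ν : Ordinal,
    (∀ x ∈ A ++ B, ν ≤ x) →
    WCDer A (ν :: B) ∨ WCDer B (ν :: A) ∨ (WCDer A B ∧ WCDer B A) := by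
  induction n using Nat.strong_induction_on with
  | _ n ih =>
  rintro A B rfl ν hν
  by_cases hne : A ++ B = []
  · obtain ⟨rfl, rfl⟩ := List.append_eq_nil_iff.1 hne
    exact .inr (.inr ⟨.top _, .top _⟩)
  obtain ⟨μ, hμ, hmin⟩ := exists_min hne
  -- The claim for the least entry `μ` is the strongest one.
  suffices H : WCDer A (μ :: B) ∨ WCDer B (μ :: A) ∨ (WCDer A B ∧ WCDer B A) from
    H.imp (fun h => h.cut (mono_le (hν μ hμ) _)) (Or.imp_left fun h => h.cut (mono_le (hν μ hμ) _))
  -- Unless `Y ⊢ μX`, the worm `X` derives the second part of the cut of `Y` at `μ`.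
  have key : ∀ X Y Y₁ Y₂ : Worm, X.length + Y.length = A.length + B.length → Y = Y₁ ++ Y₂ →
      (∀ x ∈ X, μ ≤ x) → (∀ x ∈ Y, μ ≤ x) → (∀ x ∈ Y₁, μ < x) → HeadLE μ Y₂ →
      WCDer X Y₂ ∨ WCDer Y (μ :: X) := by
    rintro X Y Y₁ Y₂ hlen rfl hX hY h₁ h₂
    rcases Y₂ with _ | ⟨b, Y₃⟩
    · exact .inl (.top _)
    obtain rfl : b = μ := le_antisymm (h₂ b (by simp)) (hY b (by simp))
    have hYb : WCDer (Y₁ ++ b :: Y₃) (b :: Y₃) := append_right h₁ h₂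
    rcases ih (X.length + Y₃.length) (by simp at hlen; omega) X Y₃ rfl b
      (by simp only [List.mem_append, List.mem_cons] at hY ⊢; grind) with h | h | ⟨-, h⟩
    · exact .inl h
    · exact .inr (hYb.cut ((nec b h).cut (.trans_ax _ _)))
    · exact .inr (hYb.cut (nec b h))
  simp only [List.mem_append] at hmin
  obtain ⟨A₁, A₂, rfl, hA₁, hA₂⟩ := exists_split μ A
  obtain ⟨B₁, B₂, rfl, hB₁, hB₂⟩ := exists_split μ B
  rcases key _ _ B₁ B₂ rfl rfl (fun x hx => hmin x (.inl hx)) (fun x hx => hmin x (.inr hx))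
    hB₁ hB₂ with hAB | h
  swap
  · exact .inr (.inl h)
  rcases key _ _ A₁ A₂ (Nat.add_comm _ _) rfl (fun x hx => hmin x (.inr hx))
    (fun x hx => hmin x (.inl hx)) hA₁ hA₂ with hBA | h
  swap
  · exact .inl h
  have hlt : A₁.length + B₁.length < (A₁ ++ A₂).length + (B₁ ++ B₂).length := by
    -- `μ` occurs in neither `A₁` nor `B₁`.
    have : A₂ ≠ [] ∨ B₂ ≠ [] := by
      by_contra! hc
      simp only [hc.1, hc.2, List.append_nil, List.mem_append] at hμ
      exact hμ.elim (fun h => (hA₁ μ h).false) (fun h => (hB₁ μ h).false)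
    simp only [← List.length_pos_iff, List.length_append] at this ⊢
    omega
  -- A strict comparison of the first parts transfers to the whole worms.
  have lift : ∀ X Y₁ Y₂ : Worm, (∀ x ∈ Y₁, μ < x) → HeadLE μ Y₂ → WCDer X ((μ + 1) :: Y₁) →
      WCDer X Y₂ → WCDer X (μ :: (Y₁ ++ Y₂)) := fun X Y₁ Y₂ h₁ h₂ h h' =>
    WCDer.cut ((append_iff (A := (μ + 1) :: Y₁) (by simpa using h₁) h₂).2 ⟨h, h'⟩)
      (.mono_ax _ (Order.lt_add_one_iff.2 le_rfl))
  rcases ih _ hlt A₁ B₁ rfl (μ + 1) (by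
    intro x hx
    exact Order.add_one_le_iff.2 ((List.mem_append.1 hx).elim (hA₁ x) (hB₁ x)))
    with h | h | ⟨h, h'⟩
  · exact .inl (lift _ _ _ hB₁ hB₂ ((append_left _ _).cut h) hAB)
  · exact .inr (.inl (lift _ _ _ hA₁ hA₂ ((append_left _ _).cut h) hBA))
  · exact .inr (.inr ⟨(append_iff hB₁ hB₂).2 ⟨(append_left _ _).cut h, hAB⟩,
      (append_iff hA₁ hA₂).2 ⟨(append_left _ _).cut h', hBA⟩⟩)

/-- Worms without entries below `μ` that are empty or start with `μ` are comparable. -/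
theorem comparable {μ : Ordinal} {A B : Worm} (hA : HeadLE μ A) (hB : HeadLE μ B)
    (hAμ : ∀ x ∈ A, μ ≤ x) (hBμ : ∀ x ∈ B, μ ≤ x) : WCDer A B ∨ WCDer B A := by
  rcases A with _ | ⟨a, A⟩
  · exact .inr (.top _)
  rcases B with _ | ⟨b, B⟩
  · exact .inl (.top _)
  obtain rfl : a = μ := le_antisymm (hA a (by simp)) (hAμ a (by simp))
  obtain rfl : b = a := le_antisymm (hB b (by simp)) (hBμ b (by simp))
  rcases trichotomy _ A B rfl b (by simp at hAμ hBμ ⊢; grind) with h | h | h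
  · exact .inl ((nec b h).cut (.trans_ax _ _))
  · exact .inr ((nec b h).cut (.trans_ax _ _))
  · exact .inl (nec b h.1)

/-- Binary meets exist in WC. The bound on the first entry is what makes the meet of two second
parts of cuts at `β` again such a part. -/
theorem exists_meet (n : ℕ) : ∀ A B : Worm, A.length + B.length = n →
    ∃ M : Worm, (∀ D, WCDer D M ↔ WCDer D A ∧ WCDer D B) ∧ (∀ x ∈ M, x ∈ A ∨ x ∈ B) ∧
      ∀ β, HeadLE β A → HeadLE β B → HeadLE β M := by
  induction n using Nat.strong_induction_on with
  | _ n ih =>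
  rintro A B rfl
  by_cases hne : A ++ B = []
  · obtain ⟨rfl, rfl⟩ := List.append_eq_nil_iff.1 hne
    exact ⟨[], by simp, by simp, fun _ h _ => h⟩
  obtain ⟨μ, hμ, hmin⟩ := exists_min hne
  simp only [List.mem_append] at hmin
  -- A bound on the first entries of `A` and `B` also bounds `μ`.
  have hle : ∀ β, HeadLE β A → HeadLE β B → μ ≤ β := by
    intro β hA hB
    rcases A with _ | ⟨a, A⟩
    · rcases B with _ | ⟨b, B⟩
      · simp at hne
      · exact (hmin b (by simp)).trans (hB b (by simp))
    · exact (hmin a (by simp)).trans (hA a (by simp))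
  obtain ⟨A₁, A₂, rfl, hA₁, hA₂⟩ := exists_split μ A
  obtain ⟨B₁, B₂, rfl, hB₁, hB₂⟩ := exists_split μ B
  have hlt : A₁.length + B₁.length < (A₁ ++ A₂).length + (B₁ ++ B₂).length := by
    have : A₂ ≠ [] ∨ B₂ ≠ [] := by
      by_contra! hc
      simp only [hc.1, hc.2, List.append_nil, List.mem_append] at hμ
      exact hμ.elim (fun h => (hA₁ μ h).false) (fun h => (hB₁ μ h).false)
    simp only [← List.length_pos_iff, List.length_append] at this ⊢
    omega
  obtain ⟨C, hC, hCmem, hChead⟩ := ih _ hlt A₁ B₁ rfl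
  obtain ⟨E, hE, hEmem, hEhead⟩ : ∃ E : Worm, (∀ D, WCDer D E ↔ WCDer D A₂ ∧ WCDer D B₂) ∧
      (∀ x ∈ E, x ∈ A₂ ∨ x ∈ B₂) ∧ HeadLE μ E := by
    rcases comparable hA₂ hB₂ (fun x hx => hmin x (by simp [hx])) (fun x hx => hmin x (by simp [hx]))
      with h | h
    · exact ⟨A₂, fun D => ⟨fun hD => ⟨hD, hD.cut h⟩, And.left⟩, fun _ => .inl, hA₂⟩
    · exact ⟨B₂, fun D => ⟨fun hD => ⟨hD.cut h, hD⟩, And.right⟩, fun _ => .inr, hB₂⟩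
  have hCμ : ∀ x ∈ C, μ < x := fun x hx => (hCmem x hx).elim (hA₁ x) (hB₁ x)
  refine ⟨C ++ E, fun D => ?_, ?_, fun β hA hB => ?_⟩
  · rw [append_iff hCμ hEhead, append_iff hA₁ hA₂, append_iff hB₁ hB₂, hC, hE]
    tauto
  · simp only [List.mem_append]
    grind
  · have hμβ := hle β hA hB
    have hC' : HeadLE β C := by
      refine hChead β ?_ ?_
      · cases A₁ with
        | nil => simp [HeadLE]
        | cons a A => simpa [HeadLE] using hA
      · cases B₁ with
        | nil => simp [HeadLE]
        | cons b B => simpa [HeadLE] using hB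
    cases C with
    | nil => exact fun x hx => (hEhead x hx).trans hμβ
    | cons c C => simpa [HeadLE] using hC'

end WCDer

/-! ### Translation of formulas to worms -/

/-- A chosen meet of two worms in WC. -/
noncomputable def wormMeet (A B : Worm) : Worm :=
  (WCDer.exists_meet _ A B rfl).choose

theorem wormMeet_iff {A B D : Worm} : WCDer D (wormMeet A B) ↔ WCDer D A ∧ WCDer D B :=
  (WCDer.exists_meet _ A B rfl).choose_spec.1 D

theorem wormMeet_headLE {A B : Worm} {β : Ordinal} (hA : HeadLE β A) (hB : HeadLE β B) :
    HeadLE β (wormMeet A B) :=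
  (WCDer.exists_meet _ A B rfl).choose_spec.2.2 β hA hB

/-- The translation of formulas to worms that interprets conjunction as meet in WC. -/
noncomputable def RCFormula.toWorm : RCFormula → Worm
  | .top => []
  | .and φ ψ => wormMeet φ.toWorm ψ.toWorm
  | .dia α φ => α :: φ.toWorm

theorem Worm.toWorm_toRC (A : Worm) : A.toRC.toWorm = A := by
  induction A with
  | nil => rfl
  | cons a A ih => simp [Worm.toRC, RCFormula.toWorm, ih]

/-- The axiom `⟨α⟩φ ∧ ⟨β⟩ψ ⊢ ⟨α⟩(φ ∧ ⟨β⟩ψ)` holds in WC for meets. -/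
theorem wormMeet_ax5 {α β : Ordinal} (h : β < α) (A B : Worm) :
    WCDer (wormMeet (α :: A) (β :: B)) (α :: wormMeet A (β :: B)) := by
  obtain ⟨h₁, h₂⟩ := wormMeet_iff.1 (WCDer.refl (wormMeet (α :: A) (β :: B)))
  obtain ⟨A₁, A₂, rfl, hA₁, hA₂⟩ := exists_split β A
  have hαA₁ : ∀ x ∈ α :: A₁, β < x := by simpa using ⟨h, hA₁⟩
  obtain ⟨h₃, h₄⟩ := (WCDer.append_iff (A := α :: A₁) hαA₁ hA₂).1 h₁
  -- `E` absorbs `βB` into the second part of the cut, leaving `αA₁` untouched.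
  let E := wormMeet A₂ (β :: B)
  have hE : HeadLE β E := wormMeet_headLE hA₂ (by simp [HeadLE])
  obtain ⟨hE₁, hE₂⟩ := wormMeet_iff.1 (WCDer.refl E)
  have h₅ : WCDer (A₁ ++ E) E := WCDer.append_right hA₁ hE
  exact ((WCDer.append_iff (A := α :: A₁) hαA₁ hE).2 ⟨h₃, wormMeet_iff.2 ⟨h₄, h₂⟩⟩).cut
    (.nec α (wormMeet_iff.2
      ⟨(WCDer.append_iff hA₁ hA₂).2 ⟨WCDer.append_left _ _, h₅.cut hE₁⟩, h₅.cut hE₂⟩))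

theorem RCDer.toWC {φ ψ : RCFormula} (h : RCDer φ ψ) : WCDer φ.toWorm ψ.toWorm := by
  induction h with
  | refl φ => exact WCDer.refl _
  | top φ => exact .top _
  | andL φ ψ => exact (wormMeet_iff.1 (WCDer.refl _)).1
  | andR φ ψ => exact (wormMeet_iff.1 (WCDer.refl _)).2
  | trans_ax α φ => exact .trans_ax _ _
  | mono_ax φ h => exact .mono_ax _ h
  | ax5 φ ψ h => exact wormMeet_ax5 h _ _
  | cut _ _ h₁ h₂ => exact .cut h₁ h₂
  | andI _ _ h₁ h₂ => exact wormMeet_iff.2 ⟨h₁, h₂⟩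
  | nec α _ h => exact .nec α h

theorem RC_deriv_iff_WC_deriv (φ ψ : RCFormula) (A B : Worm)
    (hA : RCDer φ A.toRC ∧ RCDer A.toRC φ)
    (hB : RCDer ψ B.toRC ∧ RCDer B.toRC ψ) :
    RCDer φ ψ ↔ WCDer A B := by
  constructor
  · intro h
    have := ((hA.2.cut h).cut hB.1).toWC
    rwa [Worm.toWorm_toRC, Worm.toWorm_toRC] at this
  · intro h
    exact (hA.1.cut h.toRC).cut hB.2
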